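/- For every sequence t_1, t_2, ... of rationals, the formal power series Q = Q(x,z;t) and P = P(x,z;t) satisfy Q * (1 + z*P) = P in \mathbb{Q}[[x,z]]; equivalently, Q = 1 + \sum_{p\ge 1} t_p (x*P)^p, where the infinite series converges coefficientwise. -/

import Mathlib

open Finset

inductive Step : Type
  | u | d | h
deriving DecidableEq

/-- Lengths of maximal blocks of letters with `wt s ≠ none`, weighted by `wt`. -/
def runs (wt : Step → Option ℕ) : List Step → List ℕ
  | [] => []
  | s :: l =>
    match wt s, runs wt l with
    | none, r => r
    | some n, r =>
      match l with
      | [] => [n]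
      | s' :: _ =>
        match wt s' with
        | none => n :: r
        | some _ =>
          match r with
          | a :: rest => (n + a) :: rest
          | [] => [n]

def uRuns : List Step → List ℕ :=
  runs (fun s => match s with | Step.u => some 1 | _ => none)

def uhRuns (k : ℕ) : List Step → List ℕ :=
  runs (fun s => match s with | Step.u => some 1 | Step.h => some k | Step.d => none)

def alpha (i : ℕ) (w : List Step) : ℕ := (uRuns w).count i

def beta (i : ℕ) (w : List Step) : ℕ := (uRuns w).tail.count i

def IsNonneg (w : List Step) : Prop :=
  ∀ i : ℕ, (w.take i).count Step.d ≤ (w.take i).count Step.u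

def pathSet (m j : ℕ) : Set (List Step) :=
  {w | w.count Step.u = m ∧ w.count Step.d = m ∧ w.count Step.h = j ∧ IsNonneg w}

/-- no horizontal step lies on the x-axis -/
def NoLowH (w : List Step) : Prop :=
  ∀ (i : ℕ) (hi : i < w.length), w[i]'hi = Step.h →
    (w.take i).count Step.u ≠ (w.take i).count Step.d

def qSet (m j : ℕ) : Set (List Step) :=
  {w | w ∈ pathSet m j ∧ NoLowH w}

/-- normalized partial Bell polynomial (r!/m!) B_{m,r}(1!t₁,2!t₂,…) -/
def bellNorm (m r : ℕ) (t : ℕ → ℚ) : ℚ :=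
  ∑ f : Fin m → Fin (m + 1),
    if (∑ i : Fin m, (f i : ℕ)) = r ∧ (∑ i : Fin m, ((i : ℕ) + 1) * (f i : ℕ)) = m then
      (r.factorial : ℚ) / (∏ i : Fin m, ((f i : ℕ).factorial : ℚ)) * ∏ i : Fin m, t ((i : ℕ) + 1) ^ (f i : ℕ)
    else 0

/-- normalized potential polynomial  P_p^{(lam)}(1!t₁,2!t₂,…)/p! -/
def potential (lam p : ℕ) (t : ℕ → ℚ) : ℚ :=
  ∑ r ∈ Finset.range (p + 1), (Nat.choose lam r : ℚ) * bellNorm p r t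


noncomputable def pathGF (t : ℕ → ℚ) : MvPowerSeries (Fin 2) ℚ :=
  fun d => ∑ᶠ w ∈ pathSet (d 0) (d 1), ∏ i ∈ Finset.Icc 1 (d 0), t i ^ alpha i w

noncomputable def qGF (t : ℕ → ℚ) : MvPowerSeries (Fin 2) ℚ :=
  fun d => ∑ᶠ w ∈ qSet (d 0) (d 1), ∏ i ∈ Finset.Icc 1 (d 0), t i ^ alpha i w


/-- Weight of a word. -/
def wtw (t : ℕ → ℚ) (w : List Step) : ℚ := ((uRuns w).map t).prod

/-- Multidegree of a word. -/
noncomputable def cntw (w : List Step) : Fin 2 →₀ ℕ :=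
  Finsupp.single 0 (w.count Step.u) + Finsupp.single 1 (w.count Step.h)

def Fib (S : Set (List Step)) (n : Fin 2 →₀ ℕ) : Set (List Step) := {w | w ∈ S ∧ cntw w = n}

noncomputable def gf (t : ℕ → ℚ) (S : Set (List Step)) : MvPowerSeries (Fin 2) ℚ :=
  fun n => ∑ᶠ w ∈ Fib S n, wtw t w

def Good (S : Set (List Step)) : Prop := ∃ c, ∀ w ∈ S, w.count Step.d ≤ w.count Step.u + c

lemma coeff_gf (t : ℕ → ℚ) (S : Set (List Step)) (n : Fin 2 →₀ ℕ) :
    MvPowerSeries.coeff n (gf t S) = ∑ᶠ w ∈ Fib S n, wtw t w := rfl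

lemma len_count (w : List Step) :
    w.length = w.count Step.u + w.count Step.d + w.count Step.h := by
  induction w with
  | nil => rfl
  | cons a w ih => cases a <;> simp [List.count_cons, ih] <;> omega

instance : Fintype Step := ⟨{Step.u, Step.d, Step.h}, by intro x; cases x <;> simp⟩

lemma cntw_iff (w : List Step) (n : Fin 2 →₀ ℕ) :
    cntw w = n ↔ w.count Step.u = n 0 ∧ w.count Step.h = n 1 := by
  constructor
  · rintro rfl; simp [cntw]
  · rintro ⟨h0, h1⟩
    ext i
    fin_cases i <;> simp [cntw, h0, h1]

lemma cntw_append (a b : List Step) : cntw (a ++ b) = cntw a + cntw b := by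
  rw [cntw_iff]; simp [cntw]

lemma Good.fin {S : Set (List Step)} (hS : Good S) (n : Fin 2 →₀ ℕ) : (Fib S n).Finite := by
  obtain ⟨c, hc⟩ := hS
  refine (List.finite_length_le Step (n 0 + (n 0 + c) + n 1)).subset ?_
  rintro w ⟨hw, hn⟩
  rw [cntw_iff] at hn
  have := hc w hw
  have h2 := len_count w
  simp only [Set.mem_ofPred_eq]
  omega

lemma Good.mono {S T : Set (List Step)} (hT : Good T) (h : S ⊆ T) : Good S := by
  obtain ⟨c, hc⟩ := hT
  exact ⟨c, fun w hw => hc w (h hw)⟩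

lemma Good.conc {S T : Set (List Step)} (hS : Good S) (hT : Good T) :
    Good (Set.image2 (· ++ ·) S T) := by
  obtain ⟨c, hc⟩ := hS
  obtain ⟨c', hc'⟩ := hT
  refine ⟨c + c', ?_⟩
  rintro _ ⟨a, ha, b, hb, rfl⟩
  have := hc a ha
  have := hc' b hb
  simp only [List.count_append]; omega

lemma good_single (w : List Step) : Good {w} := ⟨w.count Step.d, by rintro _ rfl; omega⟩

lemma Good.union {S T : Set (List Step)} (hS : Good S) (hT : Good T) : Good (S ∪ T) := by
  obtain ⟨c, hc⟩ := hS
  obtain ⟨c', hc'⟩ := hT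
  refine ⟨c + c', ?_⟩
  rintro w (h | h)
  · have := hc w h; omega
  · have := hc' w h; omega

lemma gf_union (t : ℕ → ℚ) {S T : Set (List Step)} (hS : Good S) (hT : Good T)
    (hd : ∀ w, w ∈ S → w ∈ T → False) : gf t (S ∪ T) = gf t S + gf t T := by
  ext n
  rw [map_add, coeff_gf, coeff_gf, coeff_gf]
  have : Fib (S ∪ T) n = Fib S n ∪ Fib T n := by
    ext w; simp [Fib, or_and_right]
  rw [this]
  refine finsum_mem_union ?_ (hS.fin n) (hT.fin n)
  rw [Set.disjoint_left]
  rintro w ⟨h1, _⟩ ⟨h2, _⟩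
  exact hd w h1 h2

lemma gf_conc (t : ℕ → ℚ) {S T : Set (List Step)} (hS : Good S) (hT : Good T)
    (hinj : ∀ a ∈ S, ∀ b ∈ T, ∀ a' ∈ S, ∀ b' ∈ T, a ++ b = a' ++ b' → a = a' ∧ b = b')
    (hw : ∀ a ∈ S, ∀ b ∈ T, wtw t (a ++ b) = wtw t a * wtw t b) :
    gf t (Set.image2 (· ++ ·) S T) = gf t S * gf t T := by
  classical
  ext n
  rw [MvPowerSeries.coeff_mul, coeff_gf]
  simp only [coeff_gf]
  rw [finsum_mem_eq_finite_toFinset_sum _ ((hS.conc hT).fin n)]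
  have h1 : ∀ p : (Fin 2 →₀ ℕ) × (Fin 2 →₀ ℕ),
      (∑ᶠ w ∈ Fib S p.1, wtw t w) * (∑ᶠ w ∈ Fib T p.2, wtw t w) =
      ∑ x ∈ (hS.fin p.1).toFinset ×ˢ (hT.fin p.2).toFinset, wtw t x.1 * wtw t x.2 := by
    intro p
    rw [finsum_mem_eq_finite_toFinset_sum _ (hS.fin p.1),
      finsum_mem_eq_finite_toFinset_sum _ (hT.fin p.2), Finset.sum_mul_sum, Finset.sum_product]
  simp only [h1]
  rw [Finset.sum_sigma']
  symm
  refine Finset.sum_bij (fun x _ => x.2.1 ++ x.2.2) ?_ ?_ ?_ ?_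
  · rintro ⟨⟨p, q⟩, a, b⟩ h
    simp only [Finset.mem_sigma, Finset.mem_product, Set.Finite.mem_toFinset, Fib,
      Set.mem_ofPred_eq] at h ⊢
    obtain ⟨hpq, ⟨ha, hp⟩, hb, hq⟩ := h
    exact ⟨⟨a, ha, b, hb, rfl⟩, by rw [cntw_append, hp, hq]; exact Finset.HasAntidiagonal.mem_antidiagonal.1 hpq⟩
  · rintro ⟨⟨p, q⟩, a, b⟩ h ⟨⟨p', q'⟩, a', b'⟩ h' he
    simp only [Finset.mem_sigma, Finset.mem_product, Set.Finite.mem_toFinset, Fib,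
      Set.mem_ofPred_eq] at h h' he
    obtain ⟨hpq, ⟨ha, hp⟩, hb, hq⟩ := h
    obtain ⟨hpq', ⟨ha', hp'⟩, hb', hq'⟩ := h'
    obtain ⟨rfl, rfl⟩ := hinj a ha b hb a' ha' b' hb' he
    subst hp hq hp' hq'
    rfl
  · intro w h
    simp only [Set.Finite.mem_toFinset, Fib, Set.mem_ofPred_eq] at h
    obtain ⟨⟨a, ha, b, hb, rfl⟩, hn⟩ := h
    refine ⟨⟨(cntw a, cntw b), a, b⟩, ?_, rfl⟩
    simp only [Finset.mem_sigma, Finset.mem_product, Set.Finite.mem_toFinset, Fib,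
      Set.mem_ofPred_eq]
    exact ⟨Finset.HasAntidiagonal.mem_antidiagonal.2 (by rw [← cntw_append]; exact hn), ⟨ha, trivial⟩, hb, trivial⟩
  · rintro ⟨⟨p, q⟩, a, b⟩ h
    simp only [Finset.mem_sigma, Finset.mem_product, Set.Finite.mem_toFinset, Fib,
      Set.mem_ofPred_eq] at h
    exact (hw a h.2.1.1 b h.2.2.1).symm

lemma gf_single (t : ℕ → ℚ) (w : List Step) :
    gf t {w} = MvPowerSeries.monomial (cntw w) (wtw t w) := by
  classical
  ext n
  rw [coeff_gf, MvPowerSeries.coeff_monomial]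
  split_ifs with h
  · have : Fib {w} n = {w} := by
      ext v; simp [Fib]; rintro rfl; exact h.symm
    rw [this, finsum_mem_singleton]
  · have : Fib {w} n = ∅ := by
      ext v; simp [Fib]; rintro rfl; exact fun h' => h h'.symm
    rw [this, finsum_mem_empty]

/-- Recursive description of paths from height `p` to `0`. -/
def ok (b : Bool) : ℕ → List Step → Prop
  | p, [] => p = 0
  | p, Step.u :: w => ok b (p + 1) w
  | p, Step.d :: w => 1 ≤ p ∧ ok b (p - 1) w
  | p, Step.h :: w => (b = true → p ≠ 0) ∧ ok b p w

lemma ok_count {b : Bool} (w : List Step) : ∀ {p : ℕ}, ok b p w →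
    w.count Step.d = w.count Step.u + p := by
  induction w with
  | nil => intro p h; simp [ok] at h; simp [h]
  | cons a w ih =>
    intro p h
    cases a <;> simp only [ok] at h
    · have := ih h; simp [List.count_cons]; omega
    · have := ih h.2; simp [List.count_cons]; omega
    · have := ih h.2; simp [List.count_cons]; omega

lemma good_ok (b : Bool) (p : ℕ) : Good {w | ok b p w} :=
  ⟨p, fun w hw => by rw [ok_count w hw]⟩

lemma ok_of_true (w : List Step) : ∀ {p : ℕ}, ok true p w → ok false p w := by
  induction w with
  | nil => intro p h; exact h
  | cons a w ih =>
    intro p h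
    cases a <;> simp only [ok] at h ⊢
    · exact ih h
    · exact ⟨h.1, ih h.2⟩
    · exact ⟨by simp, ih h.2⟩

lemma ok_false_iff (w : List Step) : ∀ (p : ℕ), ok false p w ↔
    (w.count Step.d = w.count Step.u + p ∧
      ∀ i : ℕ, (w.take i).count Step.d ≤ (w.take i).count Step.u + p) := by
  induction w with
  | nil => intro p; simp [ok]; omega
  | cons a w ih =>
    intro p
    have key : ∀ Q : ℕ → Prop, (∀ i, Q i) ↔ Q 0 ∧ ∀ i, Q (i + 1) := by
      intro Q
      exact ⟨fun h => ⟨h 0, fun i => h _⟩, fun h i => by cases i; exact h.1; exact h.2 _⟩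
    rw [key]
    cases a <;> simp only [ok, ih, List.take_succ_cons, List.count_cons]
    · simp
      grind
    · simp
      constructor
      · rintro ⟨hp, h1, h2⟩
        refine ⟨by omega, fun i => ?_⟩
        have := h2 i; omega
      · rintro ⟨h1, h2⟩
        have h0 := h2 0
        simp at h0
        refine ⟨by omega, by omega, fun i => ?_⟩
        have := h2 i; omega
    · simp

lemma ok_true_iff (w : List Step) : ∀ (p : ℕ), ok true p w ↔
    (ok false p w ∧ ∀ (i : ℕ) (hi : i < w.length), w[i]'hi = Step.h →
    (w.take i).count Step.u + p ≠ (w.take i).count Step.d) := by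
  induction w with
  | nil => intro p; simp [ok]
  | cons a w ih =>
    intro p
    have key : (∀ (i : ℕ) (hi : i < (a :: w).length), (a :: w)[i]'hi = Step.h →
        ((a :: w).take i).count Step.u + p ≠ ((a :: w).take i).count Step.d) ↔
        (a = Step.h → p ≠ 0) ∧ ∀ (i : ℕ) (hi : i < w.length), w[i]'hi = Step.h →
        (a :: w.take i).count Step.u + p ≠ (a :: w.take i).count Step.d := by
      constructor
      · intro h
        refine ⟨fun ha => ?_, fun i hi hw => ?_⟩
        · have := h 0 (by simp) (by simpa using ha)
          simpa using this
        · have := h (i + 1) (by simpa using hi) (by simpa using hw)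
          simpa using this
      · rintro ⟨h1, h2⟩ i hi hw
        cases i with
        | zero => simpa using h1 (by simpa using hw)
        | succ i =>
          have := h2 i (by simpa using hi) (by simpa using hw)
          simpa using this
    rw [key]
    cases a <;> simp only [ok, ih, List.count_cons]
    · simp
      intro _
      constructor <;> intro h i hi hw <;> have := h i hi hw <;> omega
    · simp
      constructor
      · rintro ⟨hp, h1, h2⟩
        refine ⟨⟨hp, h1⟩, fun i hi hw => ?_⟩
        have := h2 i hi hw; omega
      · rintro ⟨⟨hp, h1⟩, h2⟩
        refine ⟨hp, h1, fun i hi hw => ?_⟩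
        have := h2 i hi hw; omega
    · simp
      tauto

lemma split_d (b : Bool) (p : ℕ) (w : List Step) : ∀ q, ok b (q + p + 1) w →
    ∃ A B, ok false q A ∧ ok b p B ∧ w = A ++ Step.d :: B := by
  induction w with
  | nil => intro q h; simp [ok] at h
  | cons a w ih =>
    intro q h
    cases a <;> simp only [ok] at h
    · obtain ⟨A, B, hA, hB, rfl⟩ := ih (q + 1) (by convert h using 1; omega)
      exact ⟨Step.u :: A, B, by simpa [ok] using hA, hB, rfl⟩
    · cases q with
      | zero => exact ⟨[], w, by simp [ok], by simpa using h.2, rfl⟩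
      | succ q =>
        obtain ⟨A, B, hA, hB, rfl⟩ := ih q (by convert h.2 using 1; omega)
        exact ⟨Step.d :: A, B, by simpa [ok] using hA, hB, rfl⟩
    · obtain ⟨A, B, hA, hB, rfl⟩ := ih q h.2
      exact ⟨Step.h :: A, B, by simpa [ok] using hA, hB, rfl⟩

lemma join_d (b : Bool) (p : ℕ) (B : List Step) (hB : ok b p B) (A : List Step) :
    ∀ q, ok false q A → ok b (q + p + 1) (A ++ Step.d :: B) := by
  induction A with
  | nil => intro q h; simp [ok] at h; subst h; simpa [ok] using hB
  | cons a w ih =>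
    intro q h
    cases a <;> simp only [ok, List.cons_append] at h ⊢
    · convert ih _ h using 1; omega
    · refine ⟨by omega, ?_⟩
      convert ih _ h.2 using 1; omega
    · exact ⟨by simp, ih _ h.2⟩

lemma inj_d (B B' : List Step) (A : List Step) : ∀ (A' : List Step) (q : ℕ),
    ok false q A → ok false q A' → A ++ Step.d :: B = A' ++ Step.d :: B' → A = A' ∧ B = B' := by
  induction A with
  | nil =>
    intro A' q h h' he
    simp only [ok] at h; subst h
    cases A' with
    | nil => simpa using he
    | cons a A' =>
      simp at he
      obtain ⟨rfl, _⟩ := he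
      simp [ok] at h'
  | cons a A ih =>
    intro A' q h h' he
    cases A' with
    | nil =>
      simp only [ok] at h'; subst h'
      simp at he
      obtain ⟨rfl, _⟩ := he
      simp [ok] at h
    | cons a' A' =>
      simp only [List.cons_append, List.cons.injEq] at he
      obtain ⟨rfl, he⟩ := he
      have : A = A' ∧ B = B' := by
        cases a <;> simp only [ok] at h h'
        · exact ih _ _ h h' he
        · exact ih _ _ h.2 h'.2 he
        · exact ih _ _ h.2 h'.2 he
      simp [this.1, this.2]

lemma split_h (w : List Step) : ∀ p, ok false p w → ok true p w ∨
    ∃ A B, ok true p A ∧ ok false 0 B ∧ w = A ++ Step.h :: B := by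
  induction w with
  | nil => intro p h; exact Or.inl h
  | cons a w ih =>
    intro p h
    cases a <;> simp only [ok] at h
    · rcases ih _ h with h | ⟨A, B, hA, hB, rfl⟩
      · exact Or.inl h
      · exact Or.inr ⟨Step.u :: A, B, hA, hB, rfl⟩
    · rcases ih _ h.2 with h' | ⟨A, B, hA, hB, rfl⟩
      · exact Or.inl ⟨h.1, h'⟩
      · exact Or.inr ⟨Step.d :: A, B, ⟨h.1, hA⟩, hB, rfl⟩
    · by_cases hp : p = 0
      · subst hp
        exact Or.inr ⟨[], w, rfl, h.2, rfl⟩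
      · rcases ih _ h.2 with h' | ⟨A, B, hA, hB, rfl⟩
        · exact Or.inl ⟨fun _ => hp, h'⟩
        · exact Or.inr ⟨Step.h :: A, B, ⟨fun _ => hp, hA⟩, hB, rfl⟩

lemma join_h (B : List Step) (hB : ok false 0 B) (A : List Step) :
    ∀ p, ok true p A → ok false p (A ++ Step.h :: B) ∧ ¬ ok true p (A ++ Step.h :: B) := by
  induction A with
  | nil => intro q h; simp [ok] at h; subst h; simpa [ok] using hB
  | cons a w ih =>
    intro q h
    cases a <;> simp only [ok, List.cons_append] at h ⊢
    · exact ih _ h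
    · have := ih _ h.2; tauto
    · have := ih _ h.2
      refine ⟨⟨by simp, this.1⟩, fun h' => this.2 h'.2⟩

lemma inj_h (B B' : List Step) (A : List Step) : ∀ (A' : List Step) (q : ℕ),
    ok true q A → ok true q A' → A ++ Step.h :: B = A' ++ Step.h :: B' → A = A' ∧ B = B' := by
  induction A with
  | nil =>
    intro A' q h h' he
    simp only [ok] at h; subst h
    cases A' with
    | nil => simpa using he
    | cons a A' =>
      simp at he
      obtain ⟨rfl, _⟩ := he
      simp [ok] at h'
  | cons a A ih =>
    intro A' q h h' he
    cases A' with
    | nil =>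
      simp only [ok] at h'; subst h'
      simp at he
      obtain ⟨rfl, _⟩ := he
      simp [ok] at h
    | cons a' A' =>
      simp only [List.cons_append, List.cons.injEq] at he
      obtain ⟨rfl, he⟩ := he
      have : A = A' ∧ B = B' := by
        cases a <;> simp only [ok] at h h'
        · exact ih _ _ h h' he
        · exact ih _ _ h.2 h'.2 he
        · exact ih _ _ h.2 h'.2 he
      simp [this.1, this.2]

/-- Length of the initial run of up-steps. -/
def lead : List Step → ℕ
  | Step.u :: w => lead w + 1
  | _ => 0

lemma lead_le (w : List Step) : lead w ≤ w.count Step.u := by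
  induction w with
  | nil => simp [lead]
  | cons a w ih => cases a <;> simp [lead, ih]

lemma lead_rep (p : ℕ) (w : List Step) : lead (List.replicate p Step.u ++ w) = p + lead w := by
  induction p with
  | zero => simp
  | succ p ih => simp [List.replicate_succ, lead, ih]; omega

lemma lead_split (w : List Step) :
    ∃ B, lead B = 0 ∧ w = List.replicate (lead w) Step.u ++ B := by
  induction w with
  | nil => exact ⟨[], rfl, rfl⟩
  | cons a w ih =>
    cases a
    · obtain ⟨B, hB, h⟩ := ih
      refine ⟨B, hB, ?_⟩
      simp only [lead, List.replicate_succ, List.cons_append]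
      rw [← h]
    · exact ⟨_, rfl, rfl⟩
    · exact ⟨_, rfl, rfl⟩

lemma ok_rep (b : Bool) (p : ℕ) (w : List Step) : ∀ q,
    ok b q (List.replicate p Step.u ++ w) ↔ ok b (q + p) w := by
  induction p with
  | zero => simp
  | succ p ih =>
    intro q
    simp only [List.replicate_succ, List.cons_append, ok, ih]
    rw [show q + 1 + p = q + (p + 1) by omega]

lemma uRuns_d (w : List Step) : uRuns (Step.d :: w) = uRuns w := by simp [uRuns, runs]
lemma uRuns_h (w : List Step) : uRuns (Step.h :: w) = uRuns w := by simp [uRuns, runs]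
lemma uRuns_u (w : List Step) (h : lead w = 0) : uRuns (Step.u :: w) = 1 :: uRuns w := by
  rcases w with _ | ⟨a, w⟩
  · simp [uRuns, runs]
  · cases a
    · simp [lead] at h
    · simp [uRuns, runs]
    · simp [uRuns, runs]

lemma uRuns_uu (w : List Step) : ∀ a r, uRuns (Step.u :: w) = a :: r →
    uRuns (Step.u :: Step.u :: w) = (a + 1) :: r := by
  intro a r h
  simp only [uRuns] at h ⊢
  rw [runs.eq_def]
  simp only [h]
  rw [Nat.add_comm]

lemma uRuns_rep (p : ℕ) (w : List Step) (h : lead w = 0) :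
    uRuns (List.replicate (p + 1) Step.u ++ w) = (p + 1) :: uRuns w := by
  induction p with
  | zero => simpa using uRuns_u w h
  | succ p ih =>
    rw [List.replicate_succ, List.replicate_succ]
    rw [List.replicate_succ] at ih
    exact uRuns_uu _ _ _ ih

lemma uRuns_lead (w : List Step) : ∃ B, lead B = 0 ∧ B.length ≤ w.length ∧
    w = List.replicate (lead w) Step.u ++ B := by
  obtain ⟨B, hB, h⟩ := lead_split w
  refine ⟨B, hB, ?_, h⟩
  conv_rhs => rw [h]
  simp

/-- Splitting of runs at a non-up letter. -/
lemma uRuns_append (B : List Step) (hB : lead B = 0) : ∀ (n : ℕ) (A : List Step), A.length ≤ n →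
    uRuns (A ++ B) = uRuns A ++ uRuns B := by
  intro n
  induction n with
  | zero =>
    intro A hA
    have : A = [] := by simpa using hA
    subst this; rfl
  | succ n ih =>
    intro A hA
    rcases A with _ | ⟨a, A⟩
    · rfl
    have hA' : A.length ≤ n := by simpa using hA
    cases a
    · obtain ⟨C, hC, hl, h⟩ := uRuns_lead A
      have h1 : Step.u :: A = List.replicate (lead A + 1) Step.u ++ C := by
        rw [List.replicate_succ, List.cons_append, ← h]
      have h2 : lead (C ++ B) = 0 := by
        rcases C with _ | ⟨c, C⟩
        · simpa using hB
        · cases c <;> simp [lead] at hC ⊢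
      rw [h1, List.append_assoc, uRuns_rep _ _ h2, uRuns_rep _ _ hC, ih C (by omega)]
      rfl
    · rw [List.cons_append, uRuns_d, uRuns_d, ih A hA']
    · rw [List.cons_append, uRuns_h, uRuns_h, ih A hA']

lemma wtw_append (t : ℕ → ℚ) (A B : List Step) (hB : lead B = 0) :
    wtw t (A ++ B) = wtw t A * wtw t B := by
  simp [wtw, uRuns_append B hB _ A le_rfl]

lemma uRuns_bound : ∀ (n : ℕ) (A : List Step), A.length ≤ n →
    ∀ i ∈ uRuns A, 1 ≤ i ∧ i ≤ A.count Step.u := by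
  intro n
  induction n with
  | zero =>
    intro A hA
    have : A = [] := by simpa using hA
    subst this; simp [uRuns, runs]
  | succ n ih =>
    intro A hA i hi
    rcases A with _ | ⟨a, A⟩
    · simp [uRuns, runs] at hi
    have hA' : A.length ≤ n := by simpa using hA
    cases a
    · obtain ⟨C, hC, hl, h⟩ := uRuns_lead A
      have h1 : Step.u :: A = List.replicate (lead A + 1) Step.u ++ C := by
        rw [List.replicate_succ, List.cons_append, ← h]
      rw [h1, uRuns_rep _ _ hC] at hi
      rw [h1]
      simp only [List.mem_cons] at hi
      simp only [List.count_append, List.count_replicate_self]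
      rcases hi with rfl | hi
      · omega
      · have := ih C (by omega) i hi
        omega
    · rw [uRuns_d] at hi
      have := ih A hA' i hi
      simpa using this
    · rw [uRuns_h] at hi
      have := ih A hA' i hi
      simpa using this

lemma wtw_eq (t : ℕ → ℚ) (w : List Step) (m : ℕ) (hm : w.count Step.u = m) :
    ∏ i ∈ Finset.Icc 1 m, t i ^ alpha i w = wtw t w := by
  rw [wtw, Finset.prod_list_map_count]
  symm
  apply Finset.prod_subset
  · intro i hi
    have := uRuns_bound _ w le_rfl i (by simpa using hi)
    simp; omega
  · intro i _ hi
    rw [List.count_eq_zero_of_not_mem (by simpa using hi), pow_zero]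

def Ps : Set (List Step) := {w | ok false 0 w}
def Ts (p : ℕ) : Set (List Step) := {w | ok true p w}
def Ts' (p : ℕ) : Set (List Step) := {w | ok true p w ∧ lead w = 0}

lemma Fib_Ps (n : Fin 2 →₀ ℕ) : pathSet (n 0) (n 1) = Fib Ps n := by
  ext w
  simp only [pathSet, Fib, Ps, Set.mem_ofPred_eq, ok_false_iff, cntw_iff, IsNonneg, add_zero]
  constructor
  · rintro ⟨h1, h2, h3, h4⟩; exact ⟨⟨by omega, h4⟩, h1, h3⟩
  · rintro ⟨⟨h1, h2⟩, h3, h4⟩; exact ⟨h3, by omega, h4, h2⟩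

lemma Fib_Qs (n : Fin 2 →₀ ℕ) : qSet (n 0) (n 1) = Fib (Ts 0) n := by
  ext w
  simp only [qSet, Set.mem_ofPred_eq, Fib_Ps]
  simp only [Fib, Ts, Ps, Set.mem_ofPred_eq, ok_true_iff, NoLowH, add_zero]
  tauto

lemma pathGF_eq (t : ℕ → ℚ) : pathGF t = gf t Ps := by
  funext n
  simp only [pathGF, gf, Fib_Ps]
  refine finsum_mem_congr rfl fun w hw => wtw_eq t w _ ?_
  exact ((cntw_iff _ _).1 hw.2).1

lemma qGF_eq (t : ℕ → ℚ) : qGF t = gf t (Ts 0) := by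
  funext n
  simp only [qGF, gf, Fib_Qs]
  refine finsum_mem_congr rfl fun w hw => wtw_eq t w _ ?_
  exact ((cntw_iff _ _).1 hw.2).1

lemma gf_nil (t : ℕ → ℚ) : gf t {[]} = 1 := by
  rw [gf_single]
  have h1 : cntw [] = 0 := by rw [cntw_iff]; simp
  have h2 : wtw t [] = 1 := by simp [wtw, uRuns, runs]
  rw [h1, h2]; rfl

/-- Words of `S` with the letter `s` put in front. -/
def pre (s : Step) (S : Set (List Step)) : Set (List Step) := Set.image2 (· ++ ·) {[s]} S

lemma mem_pre (s : Step) (S : Set (List Step)) (w : List Step) :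
    w ∈ pre s S ↔ ∃ B ∈ S, w = s :: B := by
  simp [pre, eq_comm]

lemma good_pre (s : Step) {S : Set (List Step)} (h : Good S) : Good (pre s S) :=
  (good_single _).conc h

lemma gf_pre_d (t : ℕ → ℚ) {S : Set (List Step)} (hS : Good S) :
    gf t (pre Step.d S) = gf t S := by
  have h1 : cntw [Step.d] = 0 := by rw [cntw_iff]; simp
  have h2 : wtw t [Step.d] = 1 := by simp [wtw, uRuns, runs]
  rw [pre, gf_conc t (good_single _) hS, gf_single, h1, h2]
  · exact one_mul _
  · rintro _ rfl b _ _ rfl b' _ h; simpa using h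
  · rintro _ rfl b _
    rw [h2]; simp [wtw, uRuns_d]

lemma gf_pre_h (t : ℕ → ℚ) {S : Set (List Step)} (hS : Good S) :
    gf t (pre Step.h S) = MvPowerSeries.X 1 * gf t S := by
  have h1 : cntw [Step.h] = Finsupp.single 1 1 := by rw [cntw_iff]; simp
  have h2 : wtw t [Step.h] = 1 := by simp [wtw, uRuns, runs]
  rw [pre, gf_conc t (good_single _) hS, gf_single, h1, h2]
  · rfl
  · rintro _ rfl b _ _ rfl b' _ h; simpa using h
  · rintro _ rfl b _
    rw [h2]; simp [wtw, uRuns_h]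

lemma good_P : Good Ps := good_ok _ _
lemma good_T (p : ℕ) : Good (Ts p) := good_ok _ _

lemma main1 (t : ℕ → ℚ) :
    gf t (Ts 0) * (1 + MvPowerSeries.X 1 * gf t Ps) = gf t Ps := by
  have hS : Ps = Ts 0 ∪ Set.image2 (· ++ ·) (Ts 0) (pre Step.h Ps) := by
    ext w
    constructor
    · intro hw
      rcases split_h w 0 hw with h | ⟨A, B, hA, hB, rfl⟩
      · exact Or.inl h
      · exact Or.inr ⟨A, hA, Step.h :: B, (mem_pre _ _ _).2 ⟨B, hB, rfl⟩, rfl⟩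
    · rintro (h | ⟨A, hA, C, hC, rfl⟩)
      · exact ok_of_true w h
      · obtain ⟨B, hB, rfl⟩ := (mem_pre _ _ _).1 hC
        exact (join_h B hB A 0 hA).1
  have hg := good_pre Step.h good_P
  conv_rhs => rw [hS]
  rw [gf_union t (good_T 0) ((good_T 0).conc hg), gf_conc t (good_T 0) hg, gf_pre_h t good_P]
  · ring
  · intro A hA C hC A' hA' C' hC' he
    obtain ⟨B, hB, rfl⟩ := (mem_pre _ _ _).1 hC
    obtain ⟨B', hB', rfl⟩ := (mem_pre _ _ _).1 hC'
    have := inj_h B B' A A' 0 hA hA' he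
    simp [this.1, this.2]
  · intro A hA C hC
    obtain ⟨B, hB, rfl⟩ := (mem_pre _ _ _).1 hC
    exact wtw_append t _ _ rfl
  · rintro w hw ⟨A, hA, C, hC, rfl⟩
    obtain ⟨B, hB, rfl⟩ := (mem_pre _ _ _).1 hC
    exact (join_h B hB A 0 hA).2 hw

lemma gf_mul_d (t : ℕ → ℚ) (S : Set (List Step)) (hS : S ⊆ Ps) (p : ℕ) :
    gf t (Set.image2 (· ++ ·) S (pre Step.d (Ts p))) = gf t S * gf t (Ts p) := by
  rw [gf_conc t (good_P.mono hS) (good_pre _ (good_T p)), gf_pre_d t (good_T p)]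
  · intro A hA C hC A' hA' C' hC' he
    obtain ⟨B, hB, rfl⟩ := (mem_pre _ _ _).1 hC
    obtain ⟨B', hB', rfl⟩ := (mem_pre _ _ _).1 hC'
    have := inj_d B B' A A' 0 (hS hA) (hS hA') he
    simp [this.1, this.2]
  · intro A hA C hC
    obtain ⟨B, hB, rfl⟩ := (mem_pre _ _ _).1 hC
    exact wtw_append t _ _ rfl

lemma gf_T (t : ℕ → ℚ) (p : ℕ) : gf t (Ts p) = gf t Ps ^ p * gf t (Ts 0) := by
  induction p with
  | zero => simp
  | succ p ih =>
    have : Ts (p + 1) = Set.image2 (· ++ ·) Ps (pre Step.d (Ts p)) := by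
      ext w
      constructor
      · intro hw
        have hw' : ok true (p + 1) w := hw
        obtain ⟨A, B, hA, hB, rfl⟩ := split_d true p w 0 (by simpa using hw')
        exact ⟨A, hA, Step.d :: B, (mem_pre _ _ _).2 ⟨B, hB, rfl⟩, rfl⟩
      · rintro ⟨A, hA, C, hC, rfl⟩
        obtain ⟨B, hB, rfl⟩ := (mem_pre _ _ _).1 hC
        show ok true (p + 1) (A ++ Step.d :: B)
        simpa using join_d true p B hB A 0 hA
    rw [this, gf_mul_d t Ps subset_rfl, ih]
    ring

lemma gf_T' (t : ℕ → ℚ) (p : ℕ) : gf t (Ts' (p + 1)) = gf t Ps ^ (p + 1) := by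
  have hE : {[]} ∪ pre Step.h Ps ⊆ Ps := by
    rintro w (rfl | h)
    · simp [Ps, ok]
    · obtain ⟨B, hB, rfl⟩ := (mem_pre _ _ _).1 h
      simpa [Ps, ok] using hB
  have : Ts' (p + 1) = Set.image2 (· ++ ·) ({[]} ∪ pre Step.h Ps) (pre Step.d (Ts p)) := by
    ext w
    constructor
    · rintro ⟨hw, hl⟩
      obtain ⟨A, B, hA, hB, rfl⟩ := split_d true p w 0 (by simpa using hw)
      refine ⟨A, ?_, Step.d :: B, (mem_pre _ _ _).2 ⟨B, hB, rfl⟩, rfl⟩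
      rcases A with _ | ⟨a, A⟩
      · exact Or.inl rfl
      · right
        rw [mem_pre]
        cases a
        · simp [lead] at hl
        · simp [ok] at hA
        · exact ⟨A, hA.2, rfl⟩
    · rintro ⟨A, hA, C, hC, rfl⟩
      obtain ⟨B, hB, rfl⟩ := (mem_pre _ _ _).1 hC
      refine ⟨by simpa using join_d true p B hB A 0 (hE hA), ?_⟩
      rcases hA with rfl | hA
      · rfl
      · obtain ⟨B, hB, rfl⟩ := (mem_pre _ _ _).1 hA
        rfl
  rw [this, gf_mul_d t _ hE, gf_union t (good_single _) (good_pre _ good_P), gf_nil,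
    gf_pre_h t good_P, gf_T]
  · have := main1 t
    calc _ = gf t Ps ^ p * (gf t (Ts 0) * (1 + MvPowerSeries.X 1 * gf t Ps)) := by ring
      _ = _ := by rw [this]; ring
  · rintro w rfl h
    obtain ⟨B, hB, h⟩ := (mem_pre _ _ _).1 h
    simp at h

lemma gf_rep (t : ℕ → ℚ) (p : ℕ) :
    gf t (Set.image2 (· ++ ·) {List.replicate (p + 1) Step.u} (Ts' (p + 1))) =
    MvPowerSeries.C (t (p + 1)) * (MvPowerSeries.X 0 * gf t Ps) ^ (p + 1) := by
  have hg : Good (Ts' (p + 1)) := (good_T (p + 1)).mono fun w hw => hw.1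
  have h2 : wtw t (List.replicate (p + 1) Step.u) = t (p + 1) := by
    have := uRuns_rep p [] rfl
    rw [List.append_nil] at this
    rw [wtw, this]; simp [uRuns, runs]
  have h1 : cntw (List.replicate (p + 1) Step.u) = Finsupp.single 0 (p + 1) := by
    rw [cntw_iff]; simp [List.count_replicate]
  rw [gf_conc t (good_single _) hg, gf_T', gf_single, h1, h2, mul_pow, MvPowerSeries.X_pow_eq,
    ← mul_assoc]
  · congr 1
    rw [← MvPowerSeries.monomial_zero_eq_C_apply, MvPowerSeries.monomial_mul_monomial]
    simp
  · rintro _ rfl b _ _ rfl b' _ h; simpa using h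
  · rintro _ rfl b hb
    exact wtw_append t _ _ hb.2

lemma gf_U (t : ℕ → ℚ) (m : ℕ) : gf t {w | w ∈ Ts 0 ∧ lead w ≤ m} =
    1 + ∑ p ∈ Finset.Icc 1 m,
          MvPowerSeries.C (t p) * (MvPowerSeries.X 0 * gf t Ps) ^ p := by
  induction m with
  | zero =>
    have : {w | w ∈ Ts 0 ∧ lead w ≤ 0} = {[]} := by
      ext w
      rcases w with _ | ⟨a, w⟩
      · simp [Ts, ok, lead]
      · cases a <;> simp [Ts, ok, lead]
    rw [this, gf_nil]; simp
  | succ m ih =>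
    have hU : {w | w ∈ Ts 0 ∧ lead w ≤ m + 1} = {w | w ∈ Ts 0 ∧ lead w ≤ m} ∪
        Set.image2 (· ++ ·) {List.replicate (m + 1) Step.u} (Ts' (m + 1)) := by
      ext w
      constructor
      · rintro ⟨hw, hl⟩
        rcases Nat.lt_or_ge m (lead w) with h | h
        · right
          obtain ⟨B, hB, he⟩ := lead_split w
          have hlm : lead w = m + 1 := by omega
          rw [hlm] at he
          refine ⟨_, rfl, B, ⟨?_, hB⟩, he.symm⟩
          have hw' : ok true 0 w := hw
          rw [he, ok_rep] at hw'
          simpa using hw'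
        · exact Or.inl ⟨hw, h⟩
      · rintro (h | ⟨_, rfl, B, hB, rfl⟩)
        · exact ⟨h.1, h.2.trans (Nat.le_succ m)⟩
        · refine ⟨?_, ?_⟩
          · show ok true 0 (_ ++ _)
            rw [ok_rep]; simpa using hB.1
          · show lead (_ ++ _) ≤ _
            rw [lead_rep, hB.2]
    have hg : Good (Ts' (m + 1)) := (good_T (m + 1)).mono fun w hw => hw.1
    rw [hU, gf_union t ((good_T 0).mono fun w hw => hw.1) ((good_single _).conc hg), ih, gf_rep,
      Finset.sum_Icc_succ_top (by omega), add_assoc]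
    rintro w ⟨_, h⟩ ⟨_, rfl, B, hB, rfl⟩
    have h' : lead (List.replicate (m + 1) Step.u ++ B) ≤ m := h
    rw [lead_rep] at h'
    omega

theorem stmt7 (t : ℕ → ℚ) :
    qGF t * (1 + MvPowerSeries.X 1 * pathGF t) = pathGF t ∧
    ∀ m j : ℕ,
      MvPowerSeries.coeff (Finsupp.single (0 : Fin 2) m + Finsupp.single (1 : Fin 2) j)
          (qGF t) =
      MvPowerSeries.coeff (Finsupp.single (0 : Fin 2) m + Finsupp.single (1 : Fin 2) j)
        (1 + ∑ p ∈ Finset.Icc 1 m,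
          MvPowerSeries.C (t p) * (MvPowerSeries.X 0 * pathGF t) ^ p) := by
  rw [pathGF_eq, qGF_eq]
  refine ⟨main1 t, fun m j => ?_⟩
  rw [← gf_U, coeff_gf, coeff_gf]
  congr 1
  funext w
  have : w ∈ Fib (Ts 0) (Finsupp.single (0 : Fin 2) m + Finsupp.single (1 : Fin 2) j) ↔
      w ∈ Fib {w | w ∈ Ts 0 ∧ lead w ≤ m}
        (Finsupp.single (0 : Fin 2) m + Finsupp.single (1 : Fin 2) j) := by
    simp only [Fib, Set.mem_ofPred_eq, cntw_iff]
    have := lead_le w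
    simp
    intro _ h _
    omega
  simp only [this]
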